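/- In the event-independent setting (U_i = U for all i), for any ε ≥ 0 and t ≥ 1, the supremum of V(f†) over all predictors f† generated by some perfectly calibrated predictor g̃ and some post-processing plan χ feasible for (g̃, ε, t) equals the supremum of V(f) over all finitely supported (ε,ℓ_t)-calibrated predictors f; moreover, if the latter supremum is attained by some (ε,ℓ_t)-calibrated predictor, then it is also attained by a predictor generated by a perfectly calibrated predictor and a feasible post-processing plan. -/

import Mathlib

open Finset

noncomputable section

namespace PersuasiveCalibration

/-- The environment of the persuasive calibration problem: `n` events with
probabilities `lam i > 0` summing to one and sorted expected outcomes `theta i ∈ [0,1]`. -/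
structure Setup (n : ℕ) : Type where
  lam : Fin n → ℝ
  theta : Fin n → ℝ
  lam_pos : ∀ i, 0 < lam i
  lam_sum : ∑ i, lam i = 1
  theta_mono : Monotone theta
  theta_mem : ∀ i, theta i ∈ Set.Icc (0 : ℝ) 1

variable {n : ℕ}

/-- A finitely supported probability distribution on `[0,1]`. -/
def IsDist (μ : ℝ →₀ ℝ) : Prop :=
  (∀ p, 0 ≤ μ p) ∧ (∀ p ∈ μ.support, p ∈ Set.Icc (0 : ℝ) 1) ∧ (∑ p ∈ μ.support, μ p) = 1

/-- A predictor assigns to each event a finitely supported probability distribution on `[0,1]`. -/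
def IsPredictor (f : Fin n → ℝ →₀ ℝ) : Prop := ∀ i, IsDist (f i)

/-- The (unconditional) prediction space of a predictor. -/
def suppF (f : Fin n → ℝ →₀ ℝ) : Finset ℝ := Finset.univ.biUnion fun i => (f i).support

/-- The marginalized predictor `f(p) = ∑ i, λ i * f i p`. -/
def marginal (S : Setup n) (f : Fin n → ℝ →₀ ℝ) (p : ℝ) : ℝ := ∑ i, S.lam i * f i p

/-- The true expected outcome conditional on the prediction `p`. -/
def kappa (S : Setup n) (f : Fin n → ℝ →₀ ℝ) (p : ℝ) : ℝ :=
  (∑ i, S.lam i * f i p * S.theta i) / marginal S f p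

/-- The `ℓ_t`-norm expected calibration error of a predictor. -/
def ECE (S : Setup n) (t : ℝ) (f : Fin n → ℝ →₀ ℝ) : ℝ :=
  (∑ p ∈ suppF f, marginal S f p * |kappa S f p - p| ^ t) ^ (1 / t)

/-- The principal's expected payoff from predictor `f` with indirect utilities `U i`. -/
def payoff (S : Setup n) (U : Fin n → ℝ → ℝ) (f : Fin n → ℝ →₀ ℝ) : ℝ :=
  ∑ i, S.lam i * ∑ p ∈ (f i).support, f i p * U i p

/-- The principal's payoff in the event-independent setting. -/
def payoffEI (S : Setup n) (U : ℝ → ℝ) (f : Fin n → ℝ →₀ ℝ) : ℝ :=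
  payoff S (fun _ => U) f

/-- A predictor is perfectly calibrated if `κ(q) = q` on its support. -/
def PerfectlyCalibrated (S : Setup n) (g : Fin n → ℝ →₀ ℝ) : Prop :=
  ∀ q ∈ suppF g, kappa S g q = q

/-- An event-independent post-processing plan: a finitely supported probability
distribution on `[0,1] × [0,1]`; the first coordinate is `q`, the second is `p`. -/
def IsPlan (χ : ℝ × ℝ →₀ ℝ) : Prop :=
  (∀ x, 0 ≤ χ x) ∧ (∀ x ∈ χ.support, x.1 ∈ Set.Icc (0 : ℝ) 1 ∧ x.2 ∈ Set.Icc (0 : ℝ) 1) ∧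
    (∑ x ∈ χ.support, χ x) = 1

/-- The `ℓ_t` calibration cost `∑ χ(q,p) |q - p|^t` of a plan. -/
def planCost (t : ℝ) (χ : ℝ × ℝ →₀ ℝ) : ℝ := ∑ x ∈ χ.support, χ x * |x.1 - x.2| ^ t

/-- The `q`-marginal `∑_p χ(q, p)` of a plan. -/
def planMargQ (χ : ℝ × ℝ →₀ ℝ) (q : ℝ) : ℝ :=
  ∑ x ∈ χ.support.filter fun x => x.1 = q, χ x

/-- Feasibility of a post-processing plan for a perfectly calibrated predictor `g` and
an `ℓ_t` ECE budget `ε`. -/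
def FeasiblePlan (S : Setup n) (t ε : ℝ) (g : Fin n → ℝ →₀ ℝ) (χ : ℝ × ℝ →₀ ℝ) : Prop :=
  planCost t χ ≤ ε ^ t ∧ ∀ q, planMargQ χ q = marginal S g q

/-- The value `f_i(p) = ∑_q (g̃_i(q)/g(q)) χ(q,p)` of the predictor generated by `(g̃, χ)`. -/
def genVal (S : Setup n) (g : Fin n → ℝ →₀ ℝ) (χ : ℝ × ℝ →₀ ℝ) (i : Fin n) (p : ℝ) : ℝ :=
  ∑ q ∈ suppF g, g i q / marginal S g q * χ (q, p)

/-- A predictor generated by some perfectly calibrated predictor and some feasible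
event-independent post-processing plan. -/
def IsGenerated (S : Setup n) (t ε : ℝ) (f : Fin n → ℝ →₀ ℝ) : Prop :=
  ∃ (g : Fin n → ℝ →₀ ℝ) (χ : ℝ × ℝ →₀ ℝ),
    IsPredictor g ∧ PerfectlyCalibrated S g ∧ IsPlan χ ∧ FeasiblePlan S t ε g χ ∧
      ∀ i p, f i p = genVal S g χ i p

/-- The CDF of a finitely supported distribution. -/
def cdf (μ : ℝ →₀ ℝ) (x : ℝ) : ℝ := ∑ q ∈ μ.support.filter fun q => q ≤ x, μ q

/-- The CDF of the distribution placing mass `λ_i` at `θ_i`. -/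
def priorCdf (S : Setup n) (x : ℝ) : ℝ :=
  ∑ i ∈ Finset.univ.filter fun i => S.theta i ≤ x, S.lam i

/-- `μ` is a mean-preserving contraction of the distribution putting mass `λ_i` on `θ_i`. -/
def MPCprior (S : Setup n) (μ : ℝ →₀ ℝ) : Prop :=
  (∀ s ∈ Set.Icc (0 : ℝ) 1,
      (∫ x in (0 : ℝ)..s, cdf μ x) ≤ ∫ x in (0 : ℝ)..s, priorCdf S x) ∧
    (∫ x in (0 : ℝ)..(1 : ℝ), cdf μ x) = ∫ x in (0 : ℝ)..(1 : ℝ), priorCdf S x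

/-- The objective `∑ χ(q,p) U(p)` of the program LP-TwoStep. -/
def LPobj (U : ℝ → ℝ) (χ : ℝ × ℝ →₀ ℝ) : ℝ := ∑ x ∈ χ.support, χ x * U x.2

/-- Feasibility for the program LP-TwoStep. -/
def LPFeasible (S : Setup n) (ε t : ℝ) (χ : ℝ × ℝ →₀ ℝ) (g : ℝ →₀ ℝ) : Prop :=
  (∀ x, 0 ≤ χ x) ∧
  (∀ x ∈ χ.support, x.1 ∈ Set.Icc (0 : ℝ) 1 ∧ x.2 ∈ Set.Icc (0 : ℝ) 1) ∧
  planCost t χ ≤ ε ^ t ∧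
  (∀ q, planMargQ χ q = g q) ∧ IsDist g ∧ MPCprior S g

/-- The optimal value of LP-TwoStep. -/
def OPTLP (S : Setup n) (ε t : ℝ) (U : ℝ → ℝ) : ℝ :=
  sSup {v | ∃ (χ : ℝ × ℝ →₀ ℝ) (g : ℝ →₀ ℝ), LPFeasible S ε t χ g ∧ v = LPobj U χ}

/-- Symmetric linear-tailed convex function with linear tails `[0, xL]`, `[xH, 1]` and
tail slopes `s1`, `s2` of equal absolute value. -/
def SymLinTailedConvex (Γ : ℝ → ℝ) (xL xH s1 s2 : ℝ) : Prop :=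
  ConvexOn ℝ (Set.Icc (0 : ℝ) 1) Γ ∧ 0 ≤ xL ∧ xL ≤ xH ∧ xH ≤ 1 ∧ |s1| = |s2| ∧
    (∃ c1, ∀ x ∈ Set.Icc (0 : ℝ) xL, Γ x = c1 + s1 * x) ∧
    (∃ c2, ∀ x ∈ Set.Icc xH (1 : ℝ), Γ x = c2 + s2 * x)

/-- Tuples `(i, j, q, p)` indexing a bi-event post-processing plan. -/
abbrev BiTuple (n : ℕ) := Fin n × Fin n × ℝ × ℝ

/-- The contribution ratio `r_{i,j}(q)`. -/
def ratio (S : Setup n) (i j : Fin n) (q : ℝ) : ℝ :=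
  if S.theta i < S.theta j then (S.theta j - q) / (S.theta j - S.theta i) else 1

/-- The contribution of the tuple `x = (i', j', q, p)` to event `i`:
`r_{i,j'}(q)` if `i' = i`, and `1 - r_{i',i}(q)` if `j' = i ≠ i'`. -/
def contrib (S : Setup n) (x : BiTuple n) (i : Fin n) : ℝ :=
  (if x.1 = i then ratio S x.1 x.2.1 x.2.2.1 else 0) +
    (if x.2.1 = i ∧ x.1 ≠ i then 1 - ratio S x.1 x.2.1 x.2.2.1 else 0)

/-- A bi-event post-processing plan. -/
def IsBiPlan (S : Setup n) (χ : BiTuple n →₀ ℝ) : Prop :=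
  (∀ x, 0 ≤ χ x) ∧
    ∀ x ∈ χ.support, x.1 ≤ x.2.1 ∧ x.2.2.1 ∈ Set.Icc (0 : ℝ) 1 ∧
      x.2.2.2 ∈ Set.Icc (0 : ℝ) 1 ∧ S.theta x.1 ≤ x.2.2.1 ∧ x.2.2.1 ≤ S.theta x.2.1

/-- Feasibility of a bi-event post-processing plan for `ℓ_t` ECE budget `ε`. -/
def FeasibleBiPlan (S : Setup n) (t ε : ℝ) (χ : BiTuple n →₀ ℝ) : Prop :=
  IsBiPlan S χ ∧
    (∑ x ∈ χ.support, χ x * |x.2.2.1 - x.2.2.2| ^ t) ≤ ε ^ t ∧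
    ∀ i, (∑ x ∈ χ.support, χ x * contrib S x i) = S.lam i

/-- The value `f_i(p)` of the predictor generated by a bi-event post-processing plan. -/
def genValBi (S : Setup n) (χ : BiTuple n →₀ ℝ) (i : Fin n) (p : ℝ) : ℝ :=
  1 / S.lam i * ∑ x ∈ χ.support.filter fun x => x.2.2.2 = p, χ x * contrib S x i

/-- The objective of LP-TwoStep+: `∑ χ_{i,j}(q,p) U_{i,j}(q,p)`. -/
def biObj (S : Setup n) (U : Fin n → ℝ → ℝ) (χ : BiTuple n →₀ ℝ) : ℝ :=
  ∑ x ∈ χ.support, χ x * (ratio S x.1 x.2.1 x.2.2.1 * U x.1 x.2.2.2 +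
    (1 - ratio S x.1 x.2.1 x.2.2.1) * U x.2.1 x.2.2.2)

/-- The optimal value of LP-TwoStep+. -/
def OPTBi (S : Setup n) (U : Fin n → ℝ → ℝ) (t ε : ℝ) : ℝ :=
  sSup {v | ∃ χ : BiTuple n →₀ ℝ, FeasibleBiPlan S t ε χ ∧ v = biObj S U χ}

/-- `U` is piecewise constant with all its discontinuity points in `Z`. -/
def PiecewiseConstWrt (Z : Finset ℝ) (U : ℝ → ℝ) : Prop :=
  ∀ x ∈ Set.Icc (0 : ℝ) 1, ∀ y ∈ Set.Icc (0 : ℝ) 1,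
    (∀ z ∈ Z, z ∉ Set.uIcc x y) → U x = U y

/-- The bound `S = ⌈2 ln(1/δ) / ln(1+δ)⌉` of the second discretization layer. -/
def Sbound (δ : ℝ) : ℕ := ⌈2 * Real.log (1 / δ) / Real.log (1 + δ)⌉₊

/-- The instance-dependent two-layer discretized set `S_δ`. -/
def gridSet (S : Setup n) (Z : Finset ℝ) (ε t δ : ℝ) : Set ℝ :=
  ({x : ℝ | ∃ k : ℕ, x = (k : ℝ) * δ} ∪ {(1 : ℝ)} ∪ Set.range S.theta ∪ (↑Z : Set ℝ) ∪
      {x : ℝ | ∃ z ∈ (↑Z : Set ℝ) ∪ Set.range S.theta, ∃ s : ℕ, s ≤ Sbound δ ∧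
        (x = z + (ε ^ t * δ * (1 + δ) ^ s) ^ (1 / t) ∨
          x = z - (ε ^ t * δ * (1 + δ) ^ s) ^ (1 / t))}) ∩
    Set.Icc (0 : ℝ) 1

/-- Feasibility for the discretized program LP-DiscTwoStep+. -/
def DiscFeasibleBiPlan (S : Setup n) (Z : Finset ℝ) (t ε δ : ℝ) (χ : BiTuple n →₀ ℝ) : Prop :=
  FeasibleBiPlan S t ε χ ∧
    ∀ x ∈ χ.support, x.2.2.1 ∈ gridSet S Z ε t δ ∧ x.2.2.2 ∈ gridSet S Z ε t δ

/-- The optimal value of LP-DiscTwoStep+. -/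
def OPTBiDisc (S : Setup n) (U : Fin n → ℝ → ℝ) (Z : Finset ℝ) (t ε δ : ℝ) : ℝ :=
  sSup {v | ∃ χ : BiTuple n →₀ ℝ, DiscFeasibleBiPlan S Z t ε δ χ ∧ v = biObj S U χ}

/-- A Bayesian persuasion instance with signal-dependent bias: states `θ_i` with
prior `λ`, actions `A`, sender utility `u a i = u(a, θ_i) ≥ 0`, and receiver utility
determined by `v1 a = v(a,1)` and `v0 a = v(a,0)`. -/
structure PSetup (n : ℕ) (A : Type*) : Type _ where
  lam : Fin n → ℝ
  theta : Fin n → ℝ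
  u : A → Fin n → ℝ
  v1 : A → ℝ
  v0 : A → ℝ
  lam_pos : ∀ i, 0 < lam i
  lam_sum : ∑ i, lam i = 1
  theta_mem : ∀ i, theta i ∈ Set.Icc (0 : ℝ) 1
  u_nonneg : ∀ a i, 0 ≤ u a i

variable {A σT : Type*}

/-- The receiver's utility from action `a` at belief mean `x`. -/
def rcvU (P : PSetup n A) (a : A) (x : ℝ) : ℝ := x * P.v1 a + (1 - x) * P.v0 a

/-- The total probability `m(σ)` of a signal `σ`. -/
def mass [Fintype σT] (P : PSetup n A) (π : Fin n → σT → ℝ) (σ : σT) : ℝ :=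
  ∑ i, P.lam i * π i σ

/-- The biased posterior mean `p(σ)` of the receiver upon signal `σ`. -/
def belief [Fintype σT] (P : PSetup n A) (π : Fin n → σT → ℝ) (b : σT → ℝ) (σ : σT) : ℝ :=
  (b σ + ∑ i, P.lam i * π i σ * P.theta i) / mass P π σ

/-- Validity of a sender strategy `(π, b)`. -/
def ValidStrategy [Fintype σT] (P : PSetup n A) (π : Fin n → σT → ℝ) (b : σT → ℝ) : Prop :=
  (∀ i σ, 0 ≤ π i σ) ∧ (∀ i, ∑ σ, π i σ = 1) ∧
    ∀ σ, 0 < mass P π σ → belief P π b σ ∈ Set.Icc (0 : ℝ) 1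

/-- `astar` is a receiver best-response selection for the strategy `(π, b)`. -/
def BestResponse [Fintype σT] (P : PSetup n A) (π : Fin n → σT → ℝ) (b : σT → ℝ)
    (astar : σT → A) : Prop :=
  ∀ σ, 0 < mass P π σ → ∀ a, rcvU P a (belief P π b σ) ≤ rcvU P (astar σ) (belief P π b σ)

/-- The bounded-rationality constraint on the total bias. -/
def BRconstraint [Fintype σT] (P : PSetup n A) (t ε : ℝ) (π : Fin n → σT → ℝ)
    (b : σT → ℝ) : Prop :=
  (∑ σ, mass P π σ * |b σ / mass P π σ| ^ t) ^ (1 / t) ≤ ε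

/-- The sender's expected payoff from strategy `π` with receiver selection `astar`. -/
def senderPayoff [Fintype σT] (P : PSetup n A) (π : Fin n → σT → ℝ) (astar : σT → A) : ℝ :=
  ∑ i, P.lam i * ∑ σ, π i σ * P.u (astar σ) i

/-- Feasibility for the action-recommendation program P-ActRec. -/
def PActRecFeasible [Fintype A] (P : PSetup n A) (t ε : ℝ)
    (π : Fin n → A → ℝ) (b : A → ℝ) : Prop :=
  (∀ i a, 0 ≤ π i a) ∧ (∀ i, ∑ a, π i a = 1) ∧
  (∀ a, mass P π a = 0 → b a = 0) ∧
  (∑ a, mass P π a * |b a / mass P π a| ^ t) ≤ ε ^ t ∧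
  (∀ a, 0 ≤ b a + ∑ i, P.lam i * π i a * P.theta i) ∧
  (∀ a, b a + ∑ i, P.lam i * π i a * P.theta i ≤ mass P π a) ∧
  ∀ a a' : A,
    (b a + ∑ i, P.lam i * π i a * P.theta i) * P.v1 a' +
        (mass P π a - (b a + ∑ i, P.lam i * π i a * P.theta i)) * P.v0 a' ≤
      (b a + ∑ i, P.lam i * π i a * P.theta i) * P.v1 a +
        (mass P π a - (b a + ∑ i, P.lam i * π i a * P.theta i)) * P.v0 a

/-- The sender-side marginal probability of recommendation `a` (calibration model). -/
def pmass [Fintype A] (S : Setup n) (π : Fin n → A → ℝ) (a : A) : ℝ := ∑ i, S.lam i * π i a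

/-- The biased posterior mean associated with recommendation `a` (calibration model). -/
def pbelief [Fintype A] (S : Setup n) (π : Fin n → A → ℝ) (b : A → ℝ) (a : A) : ℝ :=
  (b a + ∑ i, S.lam i * π i a * S.theta i) / pmass S π a

/-!
The payoff `V(f)` depends on `f` only through its marginal, so it suffices to compare the marginals
of the two classes of predictors.

If `f` is generated by `(g̃, χ)`, then the marginal of `f` at `p` is `∑_q χ(q, p)`, and perfect
calibration of `g̃` makes `κ_f(p)` the mean of `q` under `χ(·, p)`. Jensen's inequality for
`x ↦ |x - p| ^ t` bounds the calibration error of `f` by the cost of `χ`.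

Conversely, given a calibrated `f`, relabel each prediction `p` as `κ_f(p)`; merging predictions
with the same label gives a perfectly calibrated `g̃`. The plan carrying the mass `f(p)` on
`(κ_f(p), p)` is feasible for `g̃`, and its cost is `ECE_t(f) ^ t`. The predictor it generates may
differ from `f`, but has the same marginal.
-/

section FinitelySupported

variable {ι α β M R : Type*}

theorem mapDomain_apply_eq_sum_filter [AddCommMonoid M] [DecidableEq β] {φ : α → β} {μ : α →₀ M}
    {s : Finset α} (hs : μ.support ⊆ s) (b : β) : μ.mapDomain φ b = ∑ a ∈ s with φ a = b, μ a := by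
  rw [Finsupp.mapDomain, Finsupp.sum_apply, Finsupp.sum_of_support_subset μ hs _ (by simp),
    Finset.sum_filter]
  exact Finset.sum_congr rfl fun a _ => Finsupp.single_apply

theorem mapDomain_apply_eq_mul [Semiring R] {φ : α → R} {μ ν : α →₀ R}
    (h : ∀ a, ν a = φ a * μ a) (q : R) : ν.mapDomain φ q = q * μ.mapDomain φ q := by
  classical
  have hsupp : ν.support ⊆ μ.support :=
    Finsupp.support_subset_iff.2 fun a ha => by rw [h, Finsupp.notMem_support_iff.1 ha, mul_zero]
  rw [mapDomain_apply_eq_sum_filter hsupp, mapDomain_apply_eq_sum_filter subset_rfl,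
    Finset.mul_sum]
  exact Finset.sum_congr rfl fun a ha => by rw [h, (Finset.mem_filter.1 ha).2]

theorem sum_curry_eq_mapDomain_snd [AddCommMonoid M] {χ : α × β →₀ M} {s : Finset α}
    (hs : χ.curry.support ⊆ s) : ∑ a ∈ s, χ.curry a = χ.mapDomain Prod.snd := by
  rw [Finsupp.mapDomain, ← Finsupp.sum_curry_index χ fun _ b m => Finsupp.single b m]
  simp only [Finsupp.sum_single]
  rw [Finsupp.sum_of_support_subset _ hs _ fun _ _ => rfl]

theorem mapDomain_fst_apply [AddCommMonoid M] (χ : α × β →₀ M) (a : α) :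
    χ.mapDomain Prod.fst a = (χ.curry a).degree := by
  classical
  rw [Finsupp.mapDomain, ← Finsupp.sum_curry_index χ fun a _ m => Finsupp.single a m]
  simp only [Finsupp.sum, ← Finsupp.single_finsetSum, ← Finsupp.degree_apply,
    Finsupp.finsetSum_apply, Finsupp.single_apply, Finset.sum_ite_eq']
  split_ifs with ha
  · rfl
  · rw [Finsupp.notMem_support_iff.1 ha, map_zero]

theorem degree_smul [Semiring R] (c : R) (μ : α →₀ R) : (c • μ).degree = c * μ.degree := by
  simp [Finsupp.degree_eq_weight_one, Finsupp.weight]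

theorem sum_mul_le_linearCombination {μ : α →₀ ℝ} {c : α → ℝ} (hμ : 0 ≤ μ) (hc : 0 ≤ c)
    (s : Finset α) : ∑ a ∈ s, μ a * c a ≤ Finsupp.linearCombination ℝ c μ := by
  classical
  rw [Finsupp.linearCombination_apply, Finsupp.sum_of_support_subset μ
    (Finset.subset_union_right (s₁ := s)) _ fun a _ => zero_smul ℝ (c a)]
  exact Finset.sum_le_sum_of_subset_of_nonneg Finset.subset_union_left
    fun a _ _ => mul_nonneg (hμ a) (hc a)

/-- `μ` is a finitely supported probability distribution concentrated on `s`. `IsDist` and `IsPlan`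
unfold to it for the unit interval and the unit square. -/
def IsProbOn (s : Set α) (μ : α →₀ ℝ) : Prop :=
  0 ≤ μ ∧ (∀ a ∈ μ.support, a ∈ s) ∧ μ.degree = 1

theorem IsProbOn.mapDomain {s : Set α} {s' : Set β} {φ : α → β} {μ : α →₀ ℝ} (hμ : IsProbOn s μ)
    (hφ : ∀ a ∈ μ.support, φ a ∈ s') : IsProbOn s' (μ.mapDomain φ) := by
  classical
  refine ⟨Finsupp.mapDomain_nonneg hμ.1, fun b hb => ?_, ?_⟩
  · obtain ⟨a, ha, rfl⟩ := Finset.mem_image.1 (Finsupp.mapDomain_support hb)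
    exact hφ a ha
  · rw [Finsupp.degree_mapDomain, hμ.2.2]

theorem isProbOn_sum_smul {s : Set α} {t : Finset ι} {w : ι → ℝ} {μ : ι → α →₀ ℝ}
    (hw : ∀ i ∈ t, 0 ≤ w i) (hw_sum : ∑ i ∈ t, w i = 1) (hμ : ∀ i ∈ t, IsProbOn s (μ i)) :
    IsProbOn s (∑ i ∈ t, w i • μ i) := by
  classical
  refine ⟨Finset.sum_nonneg fun i hi => smul_nonneg (hw i hi) (hμ i hi).1, fun a ha => ?_, ?_⟩
  · obtain ⟨i, hi, ha⟩ := Finset.mem_biUnion.1 (Finsupp.support_finsetSum ha)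
    exact (hμ i hi).2.1 a (Finsupp.support_smul ha)
  · simp only [map_sum, degree_smul]
    rw [← hw_sum]
    exact Finset.sum_congr rfl fun i hi => by rw [(hμ i hi).2.2, mul_one]

end FinitelySupported

section Jensen

theorem convexOn_univ_dist_rpow {E : Type*} [SeminormedAddCommGroup E] [NormedSpace ℝ E] {t : ℝ}
    (ht : 1 ≤ t) (z : E) : ConvexOn ℝ Set.univ fun x : E => dist x z ^ t := by
  refine ⟨convex_univ, fun x _ y _ a b ha hb hab => ?_⟩
  have hdist : dist (a • x + b • y) z ≤ a • dist x z + b • dist y z :=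
    (convexOn_univ_dist z).2 trivial trivial ha hb hab
  calc dist (a • x + b • y) z ^ t ≤ (a • dist x z + b • dist y z) ^ t :=
        Real.rpow_le_rpow dist_nonneg hdist (zero_le_one.trans ht)
    _ ≤ a • dist x z ^ t + b • dist y z ^ t :=
        (convexOn_rpow ht).2 (Set.mem_Ici.2 dist_nonneg) (Set.mem_Ici.2 dist_nonneg) ha hb hab

theorem sum_mul_map_centerMass_le {ι E : Type*} [AddCommGroup E] [Module ℝ E] {C : Set E}
    {φ : E → ℝ} (hφ : ConvexOn ℝ C φ) {s : Finset ι} {w : ι → ℝ} {x : ι → E}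
    (hw : ∀ i ∈ s, 0 ≤ w i) (hx : ∀ i ∈ s, x i ∈ C) :
    (∑ i ∈ s, w i) * φ (s.centerMass w x) ≤ ∑ i ∈ s, w i * φ (x i) := by
  rcases (Finset.sum_nonneg hw).eq_or_lt with hzero | hpos
  · have hw_zero := (Finset.sum_eq_zero_iff_of_nonneg hw).1 hzero.symm
    rw [← hzero, zero_mul, Finset.sum_eq_zero fun i hi => by rw [hw_zero i hi, zero_mul]]
  · rw [← le_div_iff₀' hpos, ← inv_mul_eq_div]
    exact hφ.map_centerMass_le hw hpos hx

end Jensen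

section Aggregation

variable {ι α : Type*} [Fintype ι]

/-- The `w`-weighted mixture `∑ i, w i • f i` of a family of finitely supported functions. With
`w = λ` it is the marginal of a predictor `f`, with `w = λ * θ` the numerator of `κ`. -/
def aggregate (w : ι → ℝ) (f : ι → α →₀ ℝ) : α →₀ ℝ := ∑ i, w i • f i

theorem aggregate_apply (w : ι → ℝ) (f : ι → α →₀ ℝ) (a : α) :
    aggregate w f a = ∑ i, w i * f i a := by
  simp [aggregate, Finsupp.finsetSum_apply]

end Aggregation

section Marginal

variable {S : Setup n} {f : Fin n → ℝ →₀ ℝ} {p : ℝ}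

theorem marginal_eq_aggregate (S : Setup n) (f : Fin n → ℝ →₀ ℝ) :
    marginal S f = aggregate S.lam f :=
  funext fun p => (aggregate_apply S.lam f p).symm

theorem kappa_eq_aggregate_div (S : Setup n) (f : Fin n → ℝ →₀ ℝ) (p : ℝ) :
    kappa S f p = aggregate (S.lam * S.theta) f p / marginal S f p := by
  simp only [kappa, aggregate_apply, Pi.mul_apply, mul_right_comm]

theorem mem_suppF : p ∈ suppF f ↔ ∃ i, f i p ≠ 0 := by
  simp [suppF]

theorem support_subset_suppF (f : Fin n → ℝ →₀ ℝ) (i : Fin n) : (f i).support ⊆ suppF f :=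
  Finset.subset_biUnion_of_mem (fun i => (f i).support) (Finset.mem_univ i)

theorem support_aggregate_subset (w : Fin n → ℝ) (f : Fin n → ℝ →₀ ℝ) :
    (aggregate w f).support ⊆ suppF f :=
  Finsupp.support_finsetSum.trans <| Finset.biUnion_mono fun _ _ => Finsupp.support_smul

theorem IsPredictor.nonneg (hf : IsPredictor f) : 0 ≤ f := fun i => (hf i).1

theorem IsPredictor.isDist_aggregate (S : Setup n) (hf : IsPredictor f) :
    IsDist (aggregate S.lam f) :=
  isProbOn_sum_smul (fun i _ => (S.lam_pos i).le) S.lam_sum fun i _ => hf i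

theorem marginal_nonneg (S : Setup n) (hf : 0 ≤ f) (p : ℝ) : 0 ≤ marginal S f p :=
  Finset.sum_nonneg fun i _ => mul_nonneg (S.lam_pos i).le (hf i p)

theorem marginal_pos (S : Setup n) (hf : 0 ≤ f) (hp : p ∈ suppF f) : 0 < marginal S f p := by
  obtain ⟨i, hi⟩ := mem_suppF.1 hp
  exact Finset.sum_pos' (fun j _ => mul_nonneg (S.lam_pos j).le (hf j p))
    ⟨i, Finset.mem_univ i, mul_pos (S.lam_pos i) ((hf i p).lt_of_ne' hi)⟩

theorem aggregate_lam_mul_theta_apply (S : Setup n) (hf : 0 ≤ f) (p : ℝ) :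
    aggregate (S.lam * S.theta) f p = kappa S f p * aggregate S.lam f p := by
  by_cases hp : p ∈ suppF f
  · rw [kappa_eq_aggregate_div, ← marginal_eq_aggregate,
      div_mul_cancel₀ _ (marginal_pos S hf hp).ne']
  · have aggregate_eq_zero (w : Fin n → ℝ) : aggregate w f p = 0 :=
      Finsupp.notMem_support_iff.1 fun h => hp (support_aggregate_subset w f h)
    rw [aggregate_eq_zero, aggregate_eq_zero, mul_zero]

theorem kappa_mem_Icc (S : Setup n) (hf : 0 ≤ f) (p : ℝ) : kappa S f p ∈ Set.Icc (0 : ℝ) 1 := by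
  have hmass (i : Fin n) : 0 ≤ S.lam i * f i p := mul_nonneg (S.lam_pos i).le (hf i p)
  constructor
  · exact div_nonneg (Finset.sum_nonneg fun i _ => mul_nonneg (hmass i) (S.theta_mem i).1)
      (marginal_nonneg S hf p)
  · exact div_le_one_of_le₀
      (Finset.sum_le_sum fun i _ => mul_le_of_le_one_right (hmass i) (S.theta_mem i).2)
      (marginal_nonneg S hf p)

theorem payoffEI_eq_linearCombination (S : Setup n) (U : ℝ → ℝ) (f : Fin n → ℝ →₀ ℝ) :
    payoffEI S U f = Finsupp.linearCombination ℝ U (aggregate S.lam f) := by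
  simp only [payoffEI, payoff, aggregate, map_sum, map_smul, Finsupp.linearCombination_apply,
    Finsupp.sum, smul_eq_mul]

theorem sum_suppF_marginal_mul (S : Setup n) (f : Fin n → ℝ →₀ ℝ) (c : ℝ → ℝ) :
    ∑ p ∈ suppF f, marginal S f p * c p = Finsupp.linearCombination ℝ c (aggregate S.lam f) := by
  rw [Finsupp.linearCombination_apply, Finsupp.sum_of_support_subset _
    (support_aggregate_subset S.lam f) _ fun p _ => zero_smul ℝ (c p), marginal_eq_aggregate]
  rfl

theorem ECE_le_iff (S : Setup n) {t ε : ℝ} (ht : 0 < t) (hε : 0 ≤ ε) (hf : 0 ≤ f) :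
    ECE S t f ≤ ε ↔ ∑ p ∈ suppF f, marginal S f p * |kappa S f p - p| ^ t ≤ ε ^ t := by
  have hsum_nonneg : 0 ≤ ∑ p ∈ suppF f, marginal S f p * |kappa S f p - p| ^ t :=
    Finset.sum_nonneg fun p _ => mul_nonneg (marginal_nonneg S hf p) (by positivity)
  rw [ECE, one_div, Real.rpow_inv_le_iff_of_pos hsum_nonneg hε ht]

end Marginal

section PostProcessing

variable {S : Setup n} {t ε : ℝ} {g : Fin n → ℝ →₀ ℝ} {χ : ℝ × ℝ →₀ ℝ}

theorem planCost_eq_linearCombination (t : ℝ) (χ : ℝ × ℝ →₀ ℝ) :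
    planCost t χ = Finsupp.linearCombination ℝ (fun x : ℝ × ℝ => |x.1 - x.2| ^ t) χ := rfl

theorem planMargQ_eq_mapDomain_fst (χ : ℝ × ℝ →₀ ℝ) (q : ℝ) :
    planMargQ χ q = χ.mapDomain Prod.fst q :=
  (mapDomain_apply_eq_sum_filter subset_rfl q).symm

theorem planMargQ_eq_degree_curry (χ : ℝ × ℝ →₀ ℝ) (q : ℝ) :
    planMargQ χ q = (χ.curry q).degree := by
  rw [planMargQ_eq_mapDomain_fst, mapDomain_fst_apply]

theorem curry_support_subset_suppF (hχ : 0 ≤ χ) (hmarg : ∀ q, planMargQ χ q = marginal S g q) :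
    χ.curry.support ⊆ suppF g := by
  refine Finsupp.support_subset_iff.2 fun q hq => ?_
  have hslice (p : ℝ) : 0 ≤ χ.curry q p := hχ (q, p)
  have hzero : marginal S g q = 0 :=
    Finset.sum_eq_zero fun i _ => by
      rw [not_not.1 fun h => hq (mem_suppF.2 ⟨i, h⟩), mul_zero]
  rw [← hmarg, planMargQ_eq_degree_curry, Finsupp.degree_apply,
    Finset.sum_eq_zero_iff_of_nonneg fun p _ => hslice p] at hzero
  ext p
  by_contra hp
  exact hp (hzero p (Finsupp.mem_support_iff.2 hp))

/-- The predictor generated by `(g, χ)`, as a mixture of the slices `χ(q, ·)`; `genVal` gives its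
values. -/
def generate (S : Setup n) (g : Fin n → ℝ →₀ ℝ) (χ : ℝ × ℝ →₀ ℝ) (i : Fin n) : ℝ →₀ ℝ :=
  ∑ q ∈ suppF g, (g i q / marginal S g q) • χ.curry q

theorem generate_apply (S : Setup n) (g : Fin n → ℝ →₀ ℝ) (χ : ℝ × ℝ →₀ ℝ) (i : Fin n) (p : ℝ) :
    generate S g χ i p = genVal S g χ i p := by
  simp [generate, genVal, Finsupp.finsetSum_apply]

theorem isProbOn_inv_marginal_smul_curry (hχ : IsPlan χ)
    (hmarg : ∀ q, planMargQ χ q = marginal S g q) {q : ℝ} (hq : marginal S g q ≠ 0) :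
    IsProbOn (Set.Icc 0 1) ((marginal S g q)⁻¹ • χ.curry q) := by
  have hmass : (χ.curry q).degree = marginal S g q := by rw [← planMargQ_eq_degree_curry, hmarg]
  have hslice : 0 ≤ χ.curry q := fun p => hχ.1 (q, p)
  refine ⟨smul_nonneg (inv_nonneg.2 ?_) hslice, fun p hp => ?_, ?_⟩
  · exact hmass ▸ Finset.sum_nonneg fun p _ => hslice p
  · have hp_slice : χ.curry q p ≠ 0 := Finsupp.mem_support_iff.1 (Finsupp.support_smul hp)
    exact (hχ.2.1 (q, p) (Finsupp.mem_support_iff.2 hp_slice)).2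
  · rw [degree_smul, hmass, inv_mul_cancel₀ hq]

theorem isPredictor_generate (hg : IsPredictor g) (hχ : IsPlan χ)
    (hmarg : ∀ q, planMargQ χ q = marginal S g q) : IsPredictor (generate S g χ) := by
  intro i
  have hmixture : generate S g χ i = ∑ q ∈ suppF g, g i q • (marginal S g q)⁻¹ • χ.curry q := by
    simp only [generate, div_eq_mul_inv, mul_smul]
  have hsum : ∑ q ∈ suppF g, g i q = 1 :=
    (Finsupp.sum_of_support_subset (g i) (support_subset_suppF g i) (fun _ m => m)
      fun _ _ => rfl).symm.trans (hg i).2.2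
  rw [hmixture]
  exact isProbOn_sum_smul (fun q _ => hg.nonneg i q) hsum fun q hq =>
    isProbOn_inv_marginal_smul_curry hχ hmarg (marginal_pos S hg.nonneg hq).ne'

theorem aggregate_generate (w : Fin n → ℝ) (S : Setup n) (g : Fin n → ℝ →₀ ℝ)
    (χ : ℝ × ℝ →₀ ℝ) : aggregate w (generate S g χ) =
      ∑ q ∈ suppF g, (aggregate w g q / marginal S g q) • χ.curry q := by
  simp only [aggregate, generate, Finset.smul_sum, smul_smul, mul_div_assoc']
  rw [Finset.sum_comm]
  refine Finset.sum_congr rfl fun q _ => ?_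
  rw [← Finset.sum_smul, ← Finset.sum_div, ← aggregate_apply, aggregate]

theorem aggregate_lam_generate (hg : 0 ≤ g) :
    aggregate S.lam (generate S g χ) = ∑ q ∈ suppF g, χ.curry q := by
  rw [aggregate_generate, ← marginal_eq_aggregate]
  exact Finset.sum_congr rfl fun q hq => by rw [div_self (marginal_pos S hg hq).ne', one_smul]

theorem PerfectlyCalibrated.aggregate_generate (hg : PerfectlyCalibrated S g) :
    aggregate (S.lam * S.theta) (generate S g χ) = ∑ q ∈ suppF g, q • χ.curry q := by
  rw [PersuasiveCalibration.aggregate_generate]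
  exact Finset.sum_congr rfl fun q hq => by rw [← kappa_eq_aggregate_div, hg q hq]

theorem marginal_mul_error_generate_le (ht : 1 ≤ t) (hg : 0 ≤ g) (hcal : PerfectlyCalibrated S g)
    (hχ : 0 ≤ χ) (p : ℝ) :
    marginal S (generate S g χ) p * |kappa S (generate S g χ) p - p| ^ t ≤
      ∑ q ∈ suppF g, χ (q, p) * |q - p| ^ t := by
  have hmean : kappa S (generate S g χ) p = (suppF g).centerMass (fun q => χ (q, p)) id := by
    rw [kappa_eq_aggregate_div, marginal_eq_aggregate, aggregate_lam_generate hg,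
      hcal.aggregate_generate, Finset.centerMass, smul_eq_mul, inv_mul_eq_div]
    simp only [Finsupp.finsetSum_apply, Finsupp.smul_apply, Finsupp.curry_apply, smul_eq_mul, id,
      mul_comm]
  have hmass : marginal S (generate S g χ) p = ∑ q ∈ suppF g, χ (q, p) := by
    rw [marginal_eq_aggregate, aggregate_lam_generate hg, Finsupp.finsetSum_apply]
    rfl
  rw [hmean, hmass]
  exact sum_mul_map_centerMass_le (convexOn_univ_dist_rpow ht p) (fun q _ => hχ (q, p))
    fun _ _ => Set.mem_univ _

theorem ECE_generate_le (ht : 1 ≤ t) (hε : 0 ≤ ε) (hg : IsPredictor g)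
    (hcal : PerfectlyCalibrated S g) (hχ : IsPlan χ) (hfeas : FeasiblePlan S t ε g χ) :
    ECE S t (generate S g χ) ≤ ε := by
  have hf : 0 ≤ generate S g χ := (isPredictor_generate hg hχ hfeas.2).nonneg
  rw [ECE_le_iff S (zero_lt_one.trans_le ht) hε hf]
  calc ∑ p ∈ suppF (generate S g χ),
        marginal S (generate S g χ) p * |kappa S (generate S g χ) p - p| ^ t
      ≤ ∑ p ∈ suppF (generate S g χ), ∑ q ∈ suppF g, χ (q, p) * |q - p| ^ t :=
        Finset.sum_le_sum fun p _ => marginal_mul_error_generate_le ht hg.nonneg hcal hχ.1 p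
    _ = ∑ x ∈ suppF g ×ˢ suppF (generate S g χ), χ x * |x.1 - x.2| ^ t := by
        rw [Finset.sum_product_right]
    _ ≤ planCost t χ :=
        sum_mul_le_linearCombination hχ.1 (fun x => Real.rpow_nonneg (abs_nonneg _) t) _
    _ ≤ ε ^ t := hfeas.1

theorem IsGenerated.ECE_le {f : Fin n → ℝ →₀ ℝ} (ht : 1 ≤ t) (hε : 0 ≤ ε)
    (hf : IsGenerated S t ε f) : ECE S t f ≤ ε := by
  obtain ⟨g, χ, hg, hcal, hχ, hfeas, hfg⟩ := hf
  obtain rfl : f = generate S g χ :=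
    funext fun i => Finsupp.ext fun p => (hfg i p).trans (generate_apply S g χ i p).symm
  exact ECE_generate_le ht hε hg hcal hχ hfeas

end PostProcessing

section Merging

variable {S : Setup n} {t ε : ℝ} {f : Fin n → ℝ →₀ ℝ}

/-- The predictor that announces `κ(p)` whenever `f` announces `p`. -/
def recalibrate (S : Setup n) (f : Fin n → ℝ →₀ ℝ) (i : Fin n) : ℝ →₀ ℝ :=
  (f i).mapDomain (kappa S f)

/-- The post-processing plan that puts the mass `f(p)` on `(κ(p), p)`, undoing `recalibrate` up to
the marginal. -/
def recalibrationPlan (S : Setup n) (f : Fin n → ℝ →₀ ℝ) : ℝ × ℝ →₀ ℝ :=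
  (aggregate S.lam f).mapDomain fun p => (kappa S f p, p)

theorem aggregate_recalibrate (w : Fin n → ℝ) (S : Setup n) (f : Fin n → ℝ →₀ ℝ) :
    aggregate w (recalibrate S f) = (aggregate w f).mapDomain (kappa S f) := by
  simp only [aggregate, recalibrate, Finsupp.mapDomain_finsetSum, Finsupp.mapDomain_smul]

theorem IsPredictor.recalibrate (S : Setup n) (hf : IsPredictor f) :
    IsPredictor (recalibrate S f) := fun i =>
  IsProbOn.mapDomain (hf i) fun p _ => kappa_mem_Icc S hf.nonneg p

theorem perfectlyCalibrated_recalibrate (S : Setup n) (hf : 0 ≤ f) :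
    PerfectlyCalibrated S (recalibrate S f) := by
  intro q hq
  have hg : 0 ≤ recalibrate S f := fun i => Finsupp.mapDomain_nonneg (hf i)
  rw [kappa_eq_aggregate_div, div_eq_iff (marginal_pos S hg hq).ne', marginal_eq_aggregate,
    aggregate_recalibrate, aggregate_recalibrate]
  exact mapDomain_apply_eq_mul (aggregate_lam_mul_theta_apply S hf) q

theorem isPlan_recalibrationPlan (S : Setup n) (hf : IsPredictor f) :
    IsPlan (recalibrationPlan S f) :=
  IsProbOn.mapDomain (s' := {x : ℝ × ℝ | x.1 ∈ Set.Icc 0 1 ∧ x.2 ∈ Set.Icc 0 1})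
    (hf.isDist_aggregate S) fun p hp =>
      ⟨kappa_mem_Icc S hf.nonneg p, (hf.isDist_aggregate S).2.1 p hp⟩

theorem planMargQ_recalibrationPlan (S : Setup n) (f : Fin n → ℝ →₀ ℝ) (q : ℝ) :
    planMargQ (recalibrationPlan S f) q = marginal S (recalibrate S f) q := by
  rw [planMargQ_eq_mapDomain_fst, recalibrationPlan, ← Finsupp.mapDomain_comp,
    marginal_eq_aggregate, aggregate_recalibrate]
  rfl

theorem planCost_recalibrationPlan (S : Setup n) (t : ℝ) (f : Fin n → ℝ →₀ ℝ) :
    planCost t (recalibrationPlan S f) =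
      ∑ p ∈ suppF f, marginal S f p * |kappa S f p - p| ^ t := by
  rw [planCost_eq_linearCombination, recalibrationPlan, Finsupp.linearCombination_mapDomain,
    sum_suppF_marginal_mul]
  rfl

theorem feasiblePlan_recalibrationPlan (ht : 0 < t) (hε : 0 ≤ ε) (hf : 0 ≤ f)
    (hECE : ECE S t f ≤ ε) : FeasiblePlan S t ε (recalibrate S f) (recalibrationPlan S f) := by
  refine ⟨?_, planMargQ_recalibrationPlan S f⟩
  rw [planCost_recalibrationPlan]
  exact (ECE_le_iff S ht hε hf).1 hECE

theorem aggregate_generate_recalibrate (S : Setup n) (hf : IsPredictor f) :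
    aggregate S.lam (generate S (recalibrate S f) (recalibrationPlan S f)) =
      aggregate S.lam f := by
  have hsupp : (recalibrationPlan S f).curry.support ⊆ suppF (recalibrate S f) :=
    curry_support_subset_suppF (isPlan_recalibrationPlan S hf).1 (planMargQ_recalibrationPlan S f)
  rw [aggregate_lam_generate (hf.recalibrate S).nonneg, sum_curry_eq_mapDomain_snd hsupp,
    recalibrationPlan, ← Finsupp.mapDomain_comp]
  exact Finsupp.mapDomain_id

theorem exists_isGenerated_payoffEI_eq (ht : 0 < t) (hε : 0 ≤ ε) (U : ℝ → ℝ) (hf : IsPredictor f)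
    (hECE : ECE S t f ≤ ε) :
    ∃ f', (IsGenerated S t ε f' ∧ IsPredictor f') ∧ payoffEI S U f = payoffEI S U f' := by
  have hg := hf.recalibrate S
  have hχ := isPlan_recalibrationPlan S hf
  have hfeas := feasiblePlan_recalibrationPlan ht hε hf.nonneg hECE
  refine ⟨generate S (recalibrate S f) (recalibrationPlan S f),
    ⟨⟨_, _, hg, perfectlyCalibrated_recalibrate S hf.nonneg, hχ, hfeas, generate_apply S _ _⟩,
      isPredictor_generate hg hχ hfeas.2⟩, ?_⟩
  rw [payoffEI_eq_linearCombination, payoffEI_eq_linearCombination,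
    aggregate_generate_recalibrate S hf]

end Merging

theorem statement2_general {n : ℕ} (S : Setup n) {t ε : ℝ} (ht : 1 ≤ t) (hε : 0 ≤ ε)
    (U : ℝ → ℝ) :
    {v | ∃ f : Fin n → ℝ →₀ ℝ, (IsGenerated S t ε f ∧ IsPredictor f) ∧ v = payoffEI S U f} =
      {v | ∃ f : Fin n → ℝ →₀ ℝ, (IsPredictor f ∧ ECE S t f ≤ ε) ∧ v = payoffEI S U f} := by
  apply Set.Subset.antisymm
  · rintro v ⟨f, ⟨hgen, hf⟩, rfl⟩
    exact ⟨f, ⟨hf, hgen.ECE_le ht hε⟩, rfl⟩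
  · rintro v ⟨f, ⟨hf, hECE⟩, rfl⟩
    exact exists_isGenerated_payoffEI_eq (zero_lt_one.trans_le ht) hε U hf hECE

/-- In the event-independent setting, the supremum of the principal's
payoff over predictors generated by a perfectly calibrated predictor and a feasible
post-processing plan equals the supremum over all `(ε, ℓ_t)`-calibrated predictors;
and if the latter supremum is attained, it is attained by a generated predictor. -/
theorem statement2 {n : ℕ} (S : Setup n) (t ε : ℝ) (ht : 1 ≤ t) (hε : 0 ≤ ε)
    (U : ℝ → ℝ) (hU0 : ∀ p ∈ Set.Icc (0 : ℝ) 1, 0 ≤ U p) :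
    sSup {v | ∃ f : Fin n → ℝ →₀ ℝ,
        (IsGenerated S t ε f ∧ IsPredictor f) ∧ v = payoffEI S U f}
      = sSup {v | ∃ f : Fin n → ℝ →₀ ℝ,
        (IsPredictor f ∧ ECE S t f ≤ ε) ∧ v = payoffEI S U f} ∧
    ((∃ f : Fin n → ℝ →₀ ℝ, IsPredictor f ∧ ECE S t f ≤ ε ∧
        payoffEI S U f = sSup {v | ∃ f' : Fin n → ℝ →₀ ℝ,
          (IsPredictor f' ∧ ECE S t f' ≤ ε) ∧ v = payoffEI S U f'}) →
      ∃ f : Fin n → ℝ →₀ ℝ, IsGenerated S t ε f ∧ IsPredictor f ∧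
        payoffEI S U f = sSup {v | ∃ f' : Fin n → ℝ →₀ ℝ,
          (IsPredictor f' ∧ ECE S t f' ≤ ε) ∧ v = payoffEI S U f'}) := by
  have payoffs_eq := statement2_general S ht hε U
  refine ⟨congrArg sSup payoffs_eq, fun ⟨f, hf, hECE, hmax⟩ => ?_⟩
  obtain ⟨f', ⟨hgen, hf'⟩, hpay⟩ := payoffs_eq.ge ⟨f, ⟨hf, hECE⟩, rfl⟩
  exact ⟨f', hgen, hf', hpay.symm.trans hmax⟩

end PersuasiveCalibration
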